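/- Let ℬ ⊆ ℕ = {1,2,…} be a primitive set and for N ∈ ℕ let ℬ̃^(N) := {b ∈ ℬ : b has no prime factor ≤ N}. Then either δ(M_{ℬ̃^(N)}) = 1 for all N ∈ ℕ, or lim_{N→∞} δ(M_{ℬ̃^(N)}) = 0. -/

import Mathlib

/-!
A positive `δ(M_B)` is already nearly attained on finite subsets of `B` (Davenport–Erdős). To see
this, compare `1 / n` with the Dirichlet weights `n⁻ˢ`, `s > 1`: writing `1 / n` as the Dirichlet
convolution of `n⁻ˢ` with a nonnegative function shows that the share `∑_{n ∈ M} n⁻ˢ / ζ(s)` of a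
set `M` closed under multiples is at most `δ(M)`, while as `s → 1⁺` Abel summation makes this
share asymptotically at least `δ(M)`. Since `n⁻ˢ` is summable, the share can be computed from
`M ∩ [1, n]`, which only sees the elements of `B` up to `n`.

Suppose now that `δ(M_{B̃^(N)}) ≥ α > 0` for all `N`. Choose a finite `S ⊆ B̃^(N)` with `δ(M_S)`
close to `δ(M_{B̃^(N)})`, then a finite `T ⊆ B̃^(N)` whose elements have only prime factors larger
than `∏ S` and with `δ(M_T) > α / 2`. By the Chinese remainder theorem the complements of `M_S` and
`M_T` are independent, so `1 - δ(M_{B̃^(N)}) ≤ (1 - δ(M_S)) (1 - δ(M_T))`, which is impossible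
unless `δ(M_{B̃^(N)}) = 1`.
-/

open Filter Set Topology MeasureTheory

open scoped Classical

noncomputable section

/-- The set of multiples `M_B ⊆ ℤ` of a set `B ⊆ ℕ`. -/
def multiplesZ (B : Set ℕ) : Set ℤ := {n : ℤ | ∃ b ∈ B, (b : ℤ) ∣ n}

/-- The `B`-free integers `F_B = ℤ ∖ M_B`. -/
def freeZ (B : Set ℕ) : Set ℤ := (multiplesZ B)ᶜ

/-- The logarithmically weighted averages `(1/log n) ∑_{k=1}^n 1_A(k)/k`. -/
def logWeight (A : Set ℤ) (n : ℕ) : ℝ :=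
  (Real.log n)⁻¹ * ∑ k ∈ Finset.Icc 1 n, A.indicator (fun m : ℤ => ((m : ℝ))⁻¹) (k : ℤ)

/-- The lower logarithmic density of a set `A ⊆ ℤ`. -/
def logDensLow (A : Set ℤ) : ℝ := liminf (logWeight A) atTop

/-- `A ⊆ ℤ` has logarithmic density `d`. -/
def HasLogDensity (A : Set ℤ) (d : ℝ) : Prop := Tendsto (logWeight A) atTop (𝓝 d)

/-- `B` is primitive: no element divides another one. -/
def Primitive (B : Set ℕ) : Prop := ∀ b ∈ B, ∀ b' ∈ B, b ∣ b' → b = b'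

/-- `B` is Behrend: its set of multiples has logarithmic density one. -/
def IsBehrend (B : Set ℕ) : Prop := logDensLow (multiplesZ B) = 1

/-- `B` is taut: removing any element strictly decreases the logarithmic density
of the set of multiples. -/
def IsTaut (B : Set ℕ) : Prop :=
  ∀ b ∈ B, logDensLow (multiplesZ (B \ {b})) < logDensLow (multiplesZ B)

/-- `B̃^(N)`: the elements of `B` having no prime factor `≤ N`. -/
def Btilde (B : Set ℕ) (N : ℕ) : Set ℕ := {b ∈ B | ∀ p : ℕ, p.Prime → p ∣ b → N < p}

/-- `B^(N)`: the elements of `B` all of whose prime factors are `≤ N`. -/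
def Bsmooth (B : Set ℕ) (N : ℕ) : Set ℕ := {b ∈ B | ∀ p : ℕ, p.Prime → p ∣ b → p ≤ N}

/-! ### Logarithmic averages -/

lemma logWeight_eq_sum_filter (A : Set ℤ) (n : ℕ) :
    logWeight A n = (Real.log n)⁻¹ * ∑ k ∈ Finset.Ioc 0 n with ((k : ℕ) : ℤ) ∈ A, (k : ℝ)⁻¹ := by
  simp only [logWeight, Finset.sum_filter, Set.indicator_apply, Int.cast_natCast]
  rfl

lemma logWeight_nonneg (A : Set ℤ) (n : ℕ) : 0 ≤ logWeight A n := by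
  rw [logWeight_eq_sum_filter]
  have := Real.log_natCast_nonneg n
  positivity

lemma logWeight_mono {A A' : Set ℤ} (h : A ⊆ A') (n : ℕ) : logWeight A n ≤ logWeight A' n := by
  rw [logWeight_eq_sum_filter, logWeight_eq_sum_filter]
  have := Real.log_natCast_nonneg n
  gcongr

lemma logWeight_add_compl (A : Set ℤ) (n : ℕ) :
    logWeight A n + logWeight Aᶜ n = logWeight univ n := by
  simp only [logWeight_eq_sum_filter, ← mul_add, mem_compl_iff,
    Finset.sum_filter_add_sum_filter_not, mem_univ, Finset.filter_true]

lemma logWeight_univ (n : ℕ) : logWeight univ n = (Real.log n)⁻¹ * harmonic n := by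
  simp only [logWeight_eq_sum_filter, mem_univ, Finset.filter_true, harmonic_eq_sum_Icc]
  push_cast
  rfl

lemma tendsto_inv_log_natCast : Tendsto (fun n : ℕ => (Real.log n)⁻¹) atTop (𝓝 0) :=
  (Real.tendsto_log_atTop.comp tendsto_natCast_atTop_atTop).inv_tendsto_atTop

lemma eventually_log_natCast_pos : ∀ᶠ n : ℕ in atTop, 0 < Real.log n :=
  (Real.tendsto_log_atTop.comp tendsto_natCast_atTop_atTop).eventually_gt_atTop 0

lemma hasLogDensity_univ : HasLogDensity univ 1 := by
  have h := (tendsto_inv_log_natCast.mul Real.tendsto_harmonic_sub_log).add_const 1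
  rw [zero_mul, zero_add] at h
  refine h.congr' ?_
  filter_upwards [eventually_log_natCast_pos] with n hn
  rw [logWeight_univ]
  field_simp
  ring

lemma isBoundedUnder_le_logWeight (A : Set ℤ) : IsBoundedUnder (· ≤ ·) atTop (logWeight A) :=
  Tendsto.isBoundedUnder_le hasLogDensity_univ |>.mono_le
    (Eventually.of_forall (logWeight_mono A.subset_univ))

lemma isBoundedUnder_ge_logWeight (A : Set ℤ) : IsBoundedUnder (· ≥ ·) atTop (logWeight A) :=
  isBoundedUnder_of ⟨0, logWeight_nonneg A⟩

lemma HasLogDensity.logDensLow_eq {A : Set ℤ} {d : ℝ} (h : HasLogDensity A d) :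
    logDensLow A = d :=
  Tendsto.liminf_eq h

lemma HasLogDensity.compl {A : Set ℤ} {d : ℝ} (h : HasLogDensity A d) :
    HasLogDensity Aᶜ (1 - d) :=
  (Tendsto.sub hasLogDensity_univ h).congr fun n => by
    rw [← logWeight_add_compl A, add_sub_cancel_left]

lemma logDensLow_mono {A A' : Set ℤ} (h : A ⊆ A') : logDensLow A ≤ logDensLow A' :=
  liminf_le_liminf (Eventually.of_forall (logWeight_mono h)) (isBoundedUnder_ge_logWeight A)
    (isBoundedUnder_le_logWeight A').isCoboundedUnder_ge

lemma logDensLow_nonneg (A : Set ℤ) : 0 ≤ logDensLow A :=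
  le_liminf_of_le (isBoundedUnder_le_logWeight A).isCoboundedUnder_ge
    (Eventually.of_forall (logWeight_nonneg A))

lemma logDensLow_le_one (A : Set ℤ) : logDensLow A ≤ 1 :=
  hasLogDensity_univ.logDensLow_eq ▸ logDensLow_mono A.subset_univ

lemma eventually_lt_logWeight {A : Set ℤ} {c : ℝ} (hc : c < logDensLow A) :
    ∀ᶠ n in atTop, c < logWeight A n :=
  eventually_lt_of_lt_liminf hc (isBoundedUnder_ge_logWeight A)

lemma hasLogDensity_of_le_logDensLow {A : Set ℤ} {d : ℝ} (h : d ≤ logDensLow A)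
    (h' : 1 - d ≤ logDensLow Aᶜ) : HasLogDensity A d := by
  refine tendsto_order.2 ⟨fun c hc => eventually_lt_logWeight (hc.trans_le h), fun c hc => ?_⟩
  have hcompl : 1 - (c + d) / 2 < logDensLow Aᶜ := by linarith
  have huniv : (1 : ℝ) < 1 + (c - d) / 2 := by linarith
  filter_upwards [eventually_lt_logWeight hcompl,
    Tendsto.eventually_lt_const huniv hasLogDensity_univ] with n hn hn'
  linarith [logWeight_add_compl A n]

lemma le_logDensLow_of_mul_log_le {A : Set ℤ} {r : ℝ} {q : ℕ} (hr : 0 ≤ r) (hq : 0 < q)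
    (h : ∀ m : ℕ, r * Real.log (m + 1) ≤
      ∑ k ∈ Finset.Ioc 0 (m * q) with ((k : ℕ) : ℤ) ∈ A, (k : ℝ)⁻¹) :
    r ≤ logDensLow A := by
  have hlim : Tendsto (fun n : ℕ => r * (1 - Real.log q * (Real.log n)⁻¹)) atTop (𝓝 r) := by
    simpa using ((tendsto_inv_log_natCast.const_mul (Real.log q)).const_sub 1).const_mul r
  rw [← hlim.liminf_eq]
  refine liminf_le_liminf ?_ hlim.isBoundedUnder_ge
    (isBoundedUnder_le_logWeight A).isCoboundedUnder_ge
  filter_upwards [eventually_log_natCast_pos, eventually_gt_atTop 0] with n hlog hn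
  have hdiv : Real.log n - Real.log q ≤ Real.log ((n / q : ℕ) + 1) := by
    rw [← Real.log_div (by positivity) (by positivity)]
    refine Real.log_le_log (by positivity) ?_
    rw [div_le_iff₀ (by positivity)]
    exact_mod_cast (Nat.lt_mul_of_div_lt (Nat.lt_succ_self _) hq).le
  calc r * (1 - Real.log q * (Real.log n)⁻¹)
      = (Real.log n)⁻¹ * (r * (Real.log n - Real.log q)) := by field_simp
    _ ≤ (Real.log n)⁻¹ * ∑ k ∈ Finset.Ioc 0 (n / q * q) with ((k : ℕ) : ℤ) ∈ A, (k : ℝ)⁻¹ := by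
      gcongr
      exact (mul_le_mul_of_nonneg_left hdiv hr).trans (h _)
    _ ≤ logWeight A n := by
      rw [logWeight_eq_sum_filter]
      gcongr
      exact Nat.div_mul_le_self n q

/-! ### Periodic sets -/

lemma count_div_mul_log_le_sum_inv {p : ℕ → Prop} [DecidablePred p] {q : ℕ} (hq : 0 < q)
    (hp : Function.Periodic p q) (m : ℕ) :
    (Nat.count p q : ℝ) / q * Real.log (m + 1) ≤
      ∑ k ∈ Finset.Ioc 0 (m * q) with p k, (k : ℝ)⁻¹ := by
  induction m with
  | zero => simp
  | succ m ih =>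
    have hsplit : ∑ k ∈ Finset.Ioc 0 ((m + 1) * q) with p k, (k : ℝ)⁻¹ =
        ∑ k ∈ Finset.Ioc 0 (m * q) with p k, (k : ℝ)⁻¹ +
          ∑ k ∈ Finset.Ico (m * q + 1) (m * q + 1 + q) with p k, (k : ℝ)⁻¹ := by
      simp only [Finset.sum_filter]
      rw [← Finset.sum_Ioc_consecutive _ (Nat.zero_le (m * q)) (by gcongr; omega)]
      congr 2
      ext k
      simp only [Finset.mem_Ioc, Finset.mem_Ico, add_one_mul]
      omega
    have hblock : (Nat.count p q : ℝ) * ((m + 1) * q : ℝ)⁻¹ ≤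
        ∑ k ∈ Finset.Ico (m * q + 1) (m * q + 1 + q) with p k, (k : ℝ)⁻¹ := by
      rw [← Nat.filter_Ico_card_eq_of_periodic (m * q + 1) q p hp, ← nsmul_eq_mul]
      refine Finset.card_nsmul_le_sum _ _ _ fun k hk => ?_
      obtain ⟨hk, -⟩ := Finset.mem_filter.1 hk
      rw [Finset.mem_Ico] at hk
      have hk0 : (0 : ℝ) < k := by exact_mod_cast (by omega : 0 < k)
      gcongr
      exact_mod_cast (by rw [add_one_mul]; omega : k ≤ (m + 1) * q)
    have hlog : Real.log (m + 1 + 1) - Real.log (m + 1) ≤ (m + 1 : ℝ)⁻¹ := by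
      rw [← Real.log_div (by positivity) (by positivity)]
      refine (Real.log_le_sub_one_of_pos (by positivity)).trans_eq ?_
      field_simp
      ring
    rw [hsplit]
    push_cast
    calc (Nat.count p q : ℝ) / q * Real.log (m + 1 + 1)
        ≤ (Nat.count p q : ℝ) / q * (Real.log (m + 1) + (m + 1 : ℝ)⁻¹) := by gcongr; linarith
      _ = (Nat.count p q : ℝ) / q * Real.log (m + 1) +
          (Nat.count p q : ℝ) * ((m + 1) * q : ℝ)⁻¹ := by field_simp
      _ ≤ _ := add_le_add ih hblock

lemma count_add_count_not (p : ℕ → Prop) [DecidablePred p] (q : ℕ) :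
    Nat.count p q + Nat.count (fun k => ¬ p k) q = q := by
  simpa only [Nat.count_eq_card_filter_range, Finset.card_range] using
    Finset.card_filter_add_card_filter_not (s := Finset.range q) p

lemma hasLogDensity_of_periodic {A : Set ℤ} {q : ℕ} (hq : 0 < q)
    (hA : Function.Periodic (fun k : ℕ => (k : ℤ) ∈ A) q) :
    HasLogDensity A (Nat.count (fun k : ℕ => (k : ℤ) ∈ A) q / q) := by
  have hA' : Function.Periodic (fun k : ℕ => (k : ℤ) ∈ Aᶜ) q := fun k => congrArg Not (hA k)
  have hcount : 1 - (Nat.count (fun k : ℕ => (k : ℤ) ∈ A) q : ℝ) / q =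
      Nat.count (fun k : ℕ => (k : ℤ) ∈ Aᶜ) q / q := by
    rw [sub_eq_iff_eq_add', ← add_div, eq_comm, div_eq_one_iff_eq (by positivity)]
    norm_cast
    convert count_add_count_not (fun k : ℕ => (k : ℤ) ∈ A) q
  refine hasLogDensity_of_le_logDensLow
    (le_logDensLow_of_mul_log_le (by positivity) hq (count_div_mul_log_le_sum_inv hq hA)) ?_
  rw [hcount]
  exact le_logDensLow_of_mul_log_le (by positivity) hq fun m => by
    convert count_div_mul_log_le_sum_inv hq hA' m

lemma count_and_of_coprime {p p' : ℕ → Prop} [DecidablePred p] [DecidablePred p'] {q q' : ℕ}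
    (hqq' : q.Coprime q') (hp : Function.Periodic p q) (hp' : Function.Periodic p' q') :
    Nat.count (fun k => p k ∧ p' k) (q * q') = Nat.count p q * Nat.count p' q' := by
  simp only [Nat.count_eq_card_filter_range]
  rw [← Finset.card_product]
  refine Finset.card_nbij (fun k => (k % q, k % q')) (fun k hk => ?_) (fun k hk l hl hkl => ?_) ?_
  · simp only [Finset.coe_filter, Finset.mem_range, mem_ofPred_eq] at hk
    obtain ⟨hk, hpk, hpk'⟩ := hk
    have hpos : 0 < q * q' := by omega
    simp only [Finset.mem_coe, Finset.mem_product, Finset.mem_filter, Finset.mem_range,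
      hp.map_mod_nat, hp'.map_mod_nat]
    exact ⟨⟨Nat.mod_lt _ (Nat.pos_of_mul_pos_right hpos), hpk⟩,
      Nat.mod_lt _ (Nat.pos_of_mul_pos_left hpos), hpk'⟩
  · simp only [Finset.coe_filter, Finset.mem_range, mem_ofPred_eq, Prod.mk.injEq] at hk hl hkl
    exact ((Nat.modEq_and_modEq_iff_modEq_mul hqq').1 hkl).eq_of_lt_of_lt hk.1 hl.1
  · rintro ⟨a, b⟩ hab
    simp only [Finset.mem_coe, Finset.mem_product, Finset.mem_filter, Finset.mem_range] at hab
    obtain ⟨⟨ha, hpa⟩, hb, hpb⟩ := hab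
    obtain ⟨hka, hkb⟩ := (Nat.chineseRemainder hqq' a b).2
    have hklt := Nat.chineseRemainder_lt_mul hqq' a b (by omega) (by omega)
    set k : ℕ := (Nat.chineseRemainder hqq' a b).1
    replace hka : k % q = a := Nat.mod_eq_of_modEq hka ha
    replace hkb : k % q' = b := Nat.mod_eq_of_modEq hkb hb
    refine ⟨k, ?_, Prod.ext hka hkb⟩
    simp only [Finset.coe_filter, Finset.mem_range, mem_ofPred_eq]
    rw [← hp.map_mod_nat, ← hp'.map_mod_nat, hka, hkb]
    exact ⟨hklt, hpa, hpb⟩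

/-! ### Dirichlet weights -/

section DirichletWeights

open ArithmeticFunction ArithmeticFunction.Moebius ArithmeticFunction.zeta

variable {R : Type*}

/-- The arithmetic function underlying a completely multiplicative function, bundled as a
homomorphism of monoids with zero. -/
def arithmeticOfHom [MonoidWithZero R] (f : ℕ →*₀ R) : ArithmeticFunction R := ⟨f, map_zero f⟩

@[simp]
lemma arithmeticOfHom_apply [MonoidWithZero R] (f : ℕ →*₀ R) (n : ℕ) :
    arithmeticOfHom f n = f n := rfl

lemma isMultiplicative_arithmeticOfHom [MonoidWithZero R] (f : ℕ →*₀ R) :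
    (arithmeticOfHom f).IsMultiplicative :=
  ⟨map_one f, fun _ => map_mul f _ _⟩

lemma arithmeticOfHom_mul_pmul_moebius [CommRing R] (f : ℕ →*₀ R) :
    arithmeticOfHom f * (arithmeticOfHom f).pmul μ = 1 := by
  have hdistrib : arithmeticOfHom f * (arithmeticOfHom f).pmul μ =
      (arithmeticOfHom f).pmul ((ζ : ArithmeticFunction R) * μ) := by
    ext n
    simp only [ArithmeticFunction.mul_apply, pmul_apply, arithmeticOfHom_apply, Finset.mul_sum]
    refine Finset.sum_congr rfl fun x hx => ?_
    obtain ⟨rfl, hn⟩ := Nat.mem_divisorsAntidiagonal.1 hx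
    rw [map_mul, natCoe_apply, zeta_apply_ne (left_ne_zero_of_mul hn)]
    ring
  rw [hdistrib, coe_zeta_mul_coe_moebius]
  ext n
  obtain rfl | hn := eq_or_ne n 1
  · simp
  · simp [one_apply_ne hn]

lemma nonneg_of_prime_pow_nonneg [CommSemiring R] [PartialOrder R] [IsOrderedRing R]
    {g : ArithmeticFunction R} (hg : g.IsMultiplicative)
    (h : ∀ p k : ℕ, p.Prime → 0 ≤ g (p ^ k)) (n : ℕ) : 0 ≤ g n := by
  obtain rfl | hn := eq_or_ne n 0
  · simp
  · rw [hg.multiplicative_factorization _ hn]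
    exact Finset.prod_nonneg fun p hp => h p _ (Nat.prime_of_mem_primeFactors hp)

lemma arithmeticOfHom_mul_pmul_moebius_nonneg [CommRing R] [PartialOrder R] [IsOrderedRing R]
    {f h : ℕ →*₀ R} (hf : ∀ n, 0 ≤ f n) (hfh : ∀ n, f n ≤ h n) (n : ℕ) :
    0 ≤ (arithmeticOfHom h * (arithmeticOfHom f).pmul μ) n := by
  refine nonneg_of_prime_pow_nonneg ((isMultiplicative_arithmeticOfHom h).mul
    ((isMultiplicative_arithmeticOfHom f).pmul isMultiplicative_moebius.intCast))
    (fun p k hp => ?_) n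
  rw [mul_comm, ArithmeticFunction.mul_apply, Nat.sum_divisorsAntidiagonal (fun a b =>
    (arithmeticOfHom f).pmul μ a * arithmeticOfHom h b), Nat.sum_divisors_prime_pow hp]
  cases k with
  | zero => simp
  | succ k =>
    have hzero : ∀ i, μ (p ^ (i + 1 + 1)) = 0 := fun i => by
      rw [moebius_apply_prime_pow hp (by omega), if_neg (by omega)]
    have hdiv : p ^ (k + 1) / p = p ^ k := Nat.div_eq_of_eq_mul_left hp.pos (pow_succ p k)
    rw [Finset.sum_range_succ', Finset.sum_range_succ']
    simp only [pmul_apply, arithmeticOfHom_apply, intCoe_apply, hzero, zero_add, pow_one, pow_zero,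
      moebius_apply_prime hp, hdiv, moebius_apply_one, Nat.div_one, map_one, Int.cast_zero,
      mul_zero, zero_mul, Finset.sum_const_zero, Int.cast_neg, Int.cast_one, mul_one, one_mul]
    have hfactor : f p * -1 * h (p ^ k) + h (p ^ (k + 1)) = (h p - f p) * h (p ^ k) := by
      rw [pow_succ', map_mul]
      ring
    rw [hfactor]
    exact mul_nonneg (sub_nonneg.2 (hfh p)) ((hf _).trans (hfh _))

lemma exists_nonneg_arithmeticOfHom_mul_eq [CommRing R] [PartialOrder R] [IsOrderedRing R]
    {f h : ℕ →*₀ R} (hf : ∀ n, 0 ≤ f n) (hfh : ∀ n, f n ≤ h n) :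
    ∃ g : ArithmeticFunction R, (∀ n, 0 ≤ g n) ∧ arithmeticOfHom f * g = arithmeticOfHom h :=
  ⟨arithmeticOfHom h * (arithmeticOfHom f).pmul μ,
    arithmeticOfHom_mul_pmul_moebius_nonneg hf hfh, by
      rw [mul_left_comm, arithmeticOfHom_mul_pmul_moebius, mul_one]⟩

lemma sum_Ioc_mul_le [CommSemiring R] [PartialOrder R] [IsOrderedRing R]
    {f g : ArithmeticFunction R} (hf : ∀ n, 0 ≤ f n) (hg : ∀ n, 0 ≤ g n) (x : ℕ) :
    ∑ n ∈ Finset.Ioc 0 x, (f * g) n ≤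
      (∑ n ∈ Finset.Ioc 0 x, f n) * ∑ n ∈ Finset.Ioc 0 x, g n := by
  rw [sum_Ioc_mul_eq_sum_sum, Finset.sum_mul]
  gcongr with d
  · exact hf d
  · exact fun n _ _ => hg n
  · exact Nat.div_le_self x d

lemma sum_Ioc_mul_sum_Ioc_le [CommSemiring R] [PartialOrder R] [IsOrderedRing R]
    {f g : ArithmeticFunction R} (hf : ∀ n, 0 ≤ f n) (hg : ∀ n, 0 ≤ g n) (x y : ℕ) :
    (∑ n ∈ Finset.Ioc 0 y, f n) * ∑ n ∈ Finset.Ioc 0 x, g n ≤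
      ∑ n ∈ Finset.Ioc 0 (x * y), (f * g) n := by
  rw [sum_Ioc_mul_eq_sum_prod_filter, Finset.sum_mul_sum, ← Finset.sum_product']
  refine Finset.sum_le_sum_of_subset_of_nonneg (fun p hp => ?_)
    fun p _ _ => mul_nonneg (hf p.1) (hg p.2)
  simp only [Finset.mem_filter, Finset.mem_product, Finset.mem_Ioc] at hp ⊢
  obtain ⟨⟨h₁, h₁'⟩, h₂, h₂'⟩ := hp
  have hle : p.1 * p.2 ≤ x * y := mul_comm x y ▸ Nat.mul_le_mul h₁' h₂'
  exact ⟨⟨⟨h₁, (Nat.le_mul_of_pos_right _ h₂).trans hle⟩, h₂,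
    (Nat.le_mul_of_pos_left _ h₁).trans hle⟩, hle⟩

lemma sum_Ioc_filter_mul_sum_Ioc_le [CommSemiring R] [PartialOrder R] [IsOrderedRing R]
    {f g : ArithmeticFunction R} (hf : ∀ n, 0 ≤ f n) (hg : ∀ n, 0 ≤ g n)
    {P : ℕ → Prop} [DecidablePred P] (hP : ∀ a b, P a → P (a * b)) (x y : ℕ) :
    (∑ n ∈ Finset.Ioc 0 y with P n, f n) * ∑ n ∈ Finset.Ioc 0 x, g n ≤
      ∑ n ∈ Finset.Ioc 0 (x * y) with P n, (f * g) n := by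
  let fP : ArithmeticFunction R := ⟨fun n => if P n then f n else 0, by simp⟩
  have hfP (n : ℕ) : fP n = if P n then f n else 0 := rfl
  have hfP_nonneg (n : ℕ) : 0 ≤ fP n := by
    rw [hfP]
    split_ifs
    exacts [hf n, le_rfl]
  have hconv (n : ℕ) : (fP * g) n ≤ if P n then (f * g) n else 0 := by
    simp only [ArithmeticFunction.mul_apply, hfP]
    split_ifs with hn
    · gcongr with p
      · exact hg _
      · split_ifs
        exacts [le_rfl, hf _]
    · refine (Finset.sum_eq_zero fun p hp => ?_).le
      obtain ⟨rfl, -⟩ := Nat.mem_divisorsAntidiagonal.1 hp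
      rw [if_neg fun hp₁ => hn (hP _ _ hp₁), zero_mul]
  simp only [Finset.sum_filter, ← hfP]
  exact (sum_Ioc_mul_sum_Ioc_le hfP_nonneg hg x y).trans (Finset.sum_le_sum fun n _ => hconv n)

/-- The reciprocal powers `n ↦ n⁻ˢ`; the case `s = 0` is excluded because `0 ^ 0 = 1`. -/
def rpowRecip {s : ℝ} (hs : s ≠ 0) : ℕ →*₀ ℝ where
  toFun n := 1 / (n : ℝ) ^ s
  map_zero' := by simp [Real.zero_rpow hs]
  map_one' := by simp
  map_mul' m n := by
    rw [Nat.cast_mul, Real.mul_rpow (Nat.cast_nonneg m) (Nat.cast_nonneg n), one_div_mul_one_div]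

lemma rpowRecip_apply {s : ℝ} (hs : s ≠ 0) (n : ℕ) : rpowRecip hs n = 1 / (n : ℝ) ^ s := rfl

lemma rpowRecip_nonneg {s : ℝ} (hs : s ≠ 0) (n : ℕ) : 0 ≤ rpowRecip hs n := by
  rw [rpowRecip_apply]
  positivity

lemma rpowRecip_one_apply (n : ℕ) : rpowRecip one_ne_zero n = (n : ℝ)⁻¹ := by
  rw [rpowRecip_apply, Real.rpow_one, one_div]

lemma rpowRecip_le_rpowRecip_one {s : ℝ} (hs : 1 ≤ s) (n : ℕ) :
    rpowRecip (zero_lt_one.trans_le hs).ne' n ≤ rpowRecip one_ne_zero n := by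
  obtain rfl | hn := Nat.eq_zero_or_pos n
  · simp
  · rw [rpowRecip_apply, rpowRecip_apply]
    gcongr
    exact_mod_cast hn

lemma log_add_one_le_tsum_mul_sum {s : ℝ} (hs : 1 < s) {g : ArithmeticFunction ℝ}
    (hg : ∀ n, 0 ≤ g n) (hfg : arithmeticOfHom (rpowRecip (zero_lt_one.trans hs).ne') * g =
      arithmeticOfHom (rpowRecip one_ne_zero)) (m : ℕ) :
    Real.log (m + 1) ≤ (∑' n : ℕ, 1 / (n : ℝ) ^ s) * ∑ n ∈ Finset.Ioc 0 m, g n := by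
  have hlog : Real.log (m + 1) ≤ ∑ n ∈ Finset.Ioc 0 m, (n : ℝ)⁻¹ := by
    have h := log_add_one_le_harmonic m
    rw [harmonic_eq_sum_Icc] at h
    push_cast at h
    exact h
  have hf : ∀ n, 0 ≤ arithmeticOfHom (rpowRecip (zero_lt_one.trans hs).ne') n :=
    rpowRecip_nonneg (zero_lt_one.trans hs).ne'
  have hmul := sum_Ioc_mul_le hf hg m
  simp only [hfg, arithmeticOfHom_apply, rpowRecip_one_apply] at hmul
  refine hlog.trans (hmul.trans ?_)
  gcongr
  · exact Finset.sum_nonneg fun n _ => hg n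
  · exact (Real.summable_one_div_nat_rpow.2 hs).sum_le_tsum _ fun n _ => hf n

lemma sum_filter_le_tsum_mul_logDensLow {A : Set ℤ} (hA : ∀ a ∈ A, ∀ b, a * b ∈ A) {s : ℝ}
    (hs : 1 < s) {y : ℕ} (hy : 0 < y) :
    ∑ n ∈ Finset.Ioc 0 y with ((n : ℕ) : ℤ) ∈ A, 1 / (n : ℝ) ^ s ≤
      (∑' n : ℕ, 1 / (n : ℝ) ^ s) * logDensLow A := by
  set S := ∑ n ∈ Finset.Ioc 0 y with ((n : ℕ) : ℤ) ∈ A, 1 / (n : ℝ) ^ s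
  set W := ∑' n : ℕ, 1 / (n : ℝ) ^ s
  have hWpos : 0 < W :=
    (Real.summable_one_div_nat_rpow.2 hs).tsum_pos (fun n => by positivity) 1 (by simp)
  have : 0 ≤ S := Finset.sum_nonneg fun n _ => by positivity
  have hf : ∀ n, 0 ≤ arithmeticOfHom (rpowRecip (zero_lt_one.trans hs).ne') n :=
    rpowRecip_nonneg (zero_lt_one.trans hs).ne'
  obtain ⟨g, hg, hfg⟩ := exists_nonneg_arithmeticOfHom_mul_eq hf (rpowRecip_le_rpowRecip_one hs.le)
  rw [mul_comm, ← div_le_iff₀ hWpos]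
  refine le_logDensLow_of_mul_log_le (by positivity) hy fun m => ?_
  calc S / W * Real.log (m + 1) ≤ S / W * (W * ∑ n ∈ Finset.Ioc 0 m, g n) := by
        gcongr
        exact log_add_one_le_tsum_mul_sum hs hg hfg m
    _ = S * ∑ n ∈ Finset.Ioc 0 m, g n := by field_simp
    _ ≤ ∑ n ∈ Finset.Ioc 0 (m * y) with ((n : ℕ) : ℤ) ∈ A, (n : ℝ)⁻¹ := by
        have hP (a b : ℕ) (ha : (a : ℤ) ∈ A) : ((a * b : ℕ) : ℤ) ∈ A := by
          exact_mod_cast hA a ha b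
        have hmul := sum_Ioc_filter_mul_sum_Ioc_le hf hg hP m y
        simp only [hfg, arithmeticOfHom_apply, rpowRecip_one_apply] at hmul
        exact hmul

end DirichletWeights

/-! ### The Davenport–Erdős theorem -/

lemma neg_mul_le_sum_mul_of_antitoneOn {R : Type*} [CommRing R] [LinearOrder R]
    [IsStrictOrderedRing R] {f g : ℕ → R} {K : R}
    (hf : ∀ n, -K ≤ ∑ k ∈ Finset.Ioc 0 n, f k) (hg : AntitoneOn g (Ici 1))
    (hg0 : ∀ k, 0 ≤ g k) (n : ℕ) : -K * g 1 ≤ ∑ k ∈ Finset.Ioc 0 n, f k * g k := by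
  suffices h : (∑ k ∈ Finset.Ioc 0 n, f k + K) * g (n + 1) - K * g 1 ≤
      ∑ k ∈ Finset.Ioc 0 n, f k * g k by
    nlinarith [mul_nonneg (neg_le_iff_add_nonneg.1 (hf n)) (hg0 (n + 1))]
  induction n with
  | zero => simp
  | succ n ih =>
    have hstep : g (n + 1 + 1) ≤ g (n + 1) := hg (by simp) (by simp) (by simp)
    have hK := neg_le_iff_add_nonneg.1 (hf (n + 1))
    rw [Finset.sum_Ioc_succ_top n.zero_le] at hK
    rw [Finset.sum_Ioc_succ_top n.zero_le, Finset.sum_Ioc_succ_top n.zero_le]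
    nlinarith [mul_le_mul_of_nonneg_left hstep hK]

lemma exists_neg_le_sum_sub_mul_inv {A : Set ℤ} {c : ℝ} (hc : c < logDensLow A) :
    ∃ K : ℝ, ∀ n : ℕ,
      -K ≤ ∑ k ∈ Finset.Ioc 0 n, ((if (k : ℤ) ∈ A then 1 else 0) - c) * (k : ℝ)⁻¹ := by
  obtain ⟨c', hcc', hc'⟩ := exists_between hc
  have hsum (n : ℕ) : (Real.log n)⁻¹ *
      ∑ k ∈ Finset.Ioc 0 n, ((if (k : ℤ) ∈ A then 1 else 0) - c) * (k : ℝ)⁻¹ =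
        logWeight A n - c * logWeight univ n := by
    simp only [logWeight_eq_sum_filter, mem_univ, Finset.filter_true, Finset.sum_filter, sub_mul,
      ite_mul, one_mul, zero_mul, Finset.sum_sub_distrib, ← Finset.mul_sum]
    ring
  have hlim : Tendsto (fun n => c * logWeight univ n) atTop (𝓝 c) := by
    simpa using Tendsto.const_mul c hasLogDensity_univ
  have hev : ∀ᶠ n : ℕ in atTop,
      0 ≤ ∑ k ∈ Finset.Ioc 0 n, ((if (k : ℤ) ∈ A then 1 else 0) - c) * (k : ℝ)⁻¹ := by
    filter_upwards [eventually_lt_logWeight hc', hlim.eventually_lt_const hcc',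
      eventually_log_natCast_pos] with n hn hn' hlog
    refine nonneg_of_mul_nonneg_right ?_ (inv_pos.2 hlog)
    rw [hsum]
    linarith
  obtain ⟨K, hK⟩ := (isBoundedUnder_of_eventually_ge hev).bddBelow_range
  exact ⟨-K, fun n => by simpa using hK (mem_range_self n)⟩

lemma exists_mul_sum_sub_le_sum_filter {A : Set ℤ} {c : ℝ} (hc : c < logDensLow A) :
    ∃ K : ℝ, ∀ s : ℝ, 1 ≤ s → ∀ n : ℕ, c * ∑ k ∈ Finset.Ioc 0 n, 1 / (k : ℝ) ^ s - K ≤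
      ∑ k ∈ Finset.Ioc 0 n with ((k : ℕ) : ℤ) ∈ A, 1 / (k : ℝ) ^ s := by
  obtain ⟨K, hK⟩ := exists_neg_le_sum_sub_mul_inv hc
  refine ⟨K, fun s hs n => ?_⟩
  have hanti : AntitoneOn (fun k : ℕ => (k : ℝ) ^ (1 - s)) (Ici 1) := fun k hk l _ hkl =>
    Real.rpow_le_rpow_of_nonpos (by exact_mod_cast hk) (by exact_mod_cast hkl) (by linarith)
  have habel := neg_mul_le_sum_mul_of_antitoneOn hK hanti (fun k => by positivity) n
  rw [Nat.cast_one, Real.one_rpow, mul_one] at habel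
  have hterm : ∀ k ∈ Finset.Ioc 0 n, (k : ℝ)⁻¹ * (k : ℝ) ^ (1 - s) = 1 / (k : ℝ) ^ s := by
    intro k hk
    have hk0 : (0 : ℝ) < k := by exact_mod_cast (Finset.mem_Ioc.1 hk).1
    rw [Real.rpow_sub hk0, Real.rpow_one]
    field_simp
  have hsplit : ∑ k ∈ Finset.Ioc 0 n,
      ((if (k : ℤ) ∈ A then 1 else 0) - c) * (k : ℝ)⁻¹ * (k : ℝ) ^ (1 - s) =
        ∑ k ∈ Finset.Ioc 0 n with ((k : ℕ) : ℤ) ∈ A, 1 / (k : ℝ) ^ s -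
          c * ∑ k ∈ Finset.Ioc 0 n, 1 / (k : ℝ) ^ s := by
    rw [Finset.mul_sum, Finset.sum_filter, ← Finset.sum_sub_distrib]
    refine Finset.sum_congr rfl fun k hk => ?_
    rw [mul_assoc, hterm k hk, sub_mul, ite_mul, one_mul, zero_mul]
  linarith

lemma le_of_mul_tsum_sub_le {c c' K : ℝ} (h : ∀ s : ℝ, 1 < s →
    c' * ∑' n : ℕ, 1 / (n : ℝ) ^ s - K ≤ c * ∑' n : ℕ, 1 / (n : ℝ) ^ s) : c' ≤ c := by
  have hlim := tendsto_sub_mul_tsum_nat_rpow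
  have hsub : Tendsto (fun s : ℝ => (s - 1) * K) (𝓝[>] 1) (𝓝 0) :=
    tendsto_nhdsWithin_of_tendsto_nhds (Continuous.tendsto' (by fun_prop) _ _ (by simp))
  have hle := le_of_tendsto_of_tendsto ((hlim.const_mul c').sub hsub) (hlim.const_mul c) <| by
    filter_upwards [self_mem_nhdsWithin] with s hs
    rw [mem_Ioi] at hs
    linarith [mul_le_mul_of_nonneg_left (h s hs) (sub_nonneg.2 hs.le)]
  simpa using hle

lemma tendsto_sum_Ioc_tsum {f : ℕ → ℝ} (hf : Summable f) (hf0 : f 0 = 0) :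
    Tendsto (fun n => ∑ k ∈ Finset.Ioc 0 n, f k) atTop (𝓝 (∑' k, f k)) := by
  refine (hf.tendsto_sum_tsum_nat.comp (tendsto_add_atTop_nat 1)).congr fun n => ?_
  rw [Function.comp_apply, Finset.sum_range_succ', hf0, add_zero, Finset.range_eq_Ico,
    Finset.sum_Ico_add']
  rfl

lemma mul_mem_multiplesZ {B : Set ℕ} {a : ℤ} (ha : a ∈ multiplesZ B) (b : ℤ) :
    a * b ∈ multiplesZ B :=
  let ⟨d, hd, hda⟩ := ha
  ⟨d, hd, hda.mul_right b⟩

lemma multiplesZ_mono {B B' : Set ℕ} (h : B ⊆ B') : multiplesZ B ⊆ multiplesZ B' :=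
  fun _ ⟨b, hb, hbn⟩ => ⟨b, h hb, hbn⟩

lemma natCast_mem_multiplesZ_filter_Ioc_iff {B : Set ℕ} {k n : ℕ} (hk : k ∈ Finset.Ioc 0 n) :
    (k : ℤ) ∈ multiplesZ ↑({b ∈ Finset.Ioc 0 n | b ∈ B} : Finset ℕ) ↔ (k : ℤ) ∈ multiplesZ B := by
  obtain ⟨hk0, hkn⟩ := Finset.mem_Ioc.1 hk
  refine ⟨fun h => multiplesZ_mono (fun b hb => (Finset.mem_filter.1 hb).2) h, ?_⟩
  rintro ⟨b, hb, hbk⟩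
  have hbk' : b ∣ k := Int.natCast_dvd_natCast.1 hbk
  exact ⟨b, Finset.mem_filter.2 ⟨Finset.mem_Ioc.2 ⟨Nat.pos_of_dvd_of_pos hbk' hk0,
    (Nat.le_of_dvd hk0 hbk').trans hkn⟩, hb⟩, hbk⟩

theorem exists_finset_lt_logDensLow_multiplesZ {B : Set ℕ} {c : ℝ}
    (hc : c < logDensLow (multiplesZ B)) :
    ∃ S : Finset ℕ, 0 ∉ S ∧ ↑S ⊆ B ∧ c < logDensLow (multiplesZ S) := by
  by_contra! hS
  obtain ⟨c', hcc', hc'⟩ := exists_between hc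
  obtain ⟨K, hK⟩ := exists_mul_sum_sub_le_sum_filter hc'
  refine hcc'.not_ge (le_of_mul_tsum_sub_le (K := K) fun s hs => ?_)
  have htsum := tendsto_sum_Ioc_tsum (Real.summable_one_div_nat_rpow.2 hs)
    (by simp [Real.zero_rpow (zero_lt_one.trans hs).ne'])
  refine le_of_tendsto ((htsum.const_mul c').sub_const K) ?_
  filter_upwards [eventually_gt_atTop 0] with n hn
  let S : Finset ℕ := {b ∈ Finset.Ioc 0 n | b ∈ B}
  calc c' * ∑ k ∈ Finset.Ioc 0 n, 1 / (k : ℝ) ^ s - K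
      ≤ ∑ k ∈ Finset.Ioc 0 n with ((k : ℕ) : ℤ) ∈ multiplesZ B, 1 / (k : ℝ) ^ s := hK s hs.le n
    _ = ∑ k ∈ Finset.Ioc 0 n with ((k : ℕ) : ℤ) ∈ multiplesZ S, 1 / (k : ℝ) ^ s :=
      Finset.sum_congr (Finset.filter_congr fun k hk =>
        (natCast_mem_multiplesZ_filter_Ioc_iff hk).symm) fun _ _ => rfl
    _ ≤ (∑' n : ℕ, 1 / (n : ℝ) ^ s) * logDensLow (multiplesZ S) :=
      sum_filter_le_tsum_mul_logDensLow (fun _ ha => mul_mem_multiplesZ ha) hs hn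
    _ ≤ c * ∑' n : ℕ, 1 / (n : ℝ) ^ s := by
      rw [mul_comm]
      gcongr
      exact hS S (by simp [S]) fun b hb => (Finset.mem_filter.1 hb).2

/-! ### Independence and the dichotomy -/

lemma logDensLow_inter_of_periodic {A A' : Set ℤ} {q q' : ℕ} (hq : 0 < q) (hq' : 0 < q')
    (hqq' : q.Coprime q') (hA : Function.Periodic (fun k : ℕ => (k : ℤ) ∈ A) q)
    (hA' : Function.Periodic (fun k : ℕ => (k : ℤ) ∈ A') q') :
    logDensLow (A ∩ A') = logDensLow A * logDensLow A' := by
  have hinter : Function.Periodic (fun k : ℕ => (k : ℤ) ∈ A ∩ A') (q * q') := fun k =>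
    congrArg₂ And (mul_comm q' q ▸ hA.nat_mul q' k) (hA'.nat_mul q k)
  rw [(hasLogDensity_of_periodic hq hA).logDensLow_eq,
    (hasLogDensity_of_periodic hq' hA').logDensLow_eq,
    (hasLogDensity_of_periodic (Nat.mul_pos hq hq') hinter).logDensLow_eq, div_mul_div_comm]
  norm_cast
  rw [← count_and_of_coprime hqq' hA hA']
  congr

lemma periodic_natCast_mem_freeZ (S : Finset ℕ) :
    Function.Periodic (fun k : ℕ => (k : ℤ) ∈ freeZ S) (∏ b ∈ S, b) := fun k => by
  refine congrArg Not (propext (exists_congr fun b => and_congr_right fun hb => ?_))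
  have hbq : b ∣ ∏ b ∈ S, b := Finset.dvd_prod_of_mem (fun b => b) hb
  rw [Int.natCast_dvd_natCast, Int.natCast_dvd_natCast, Nat.dvd_add_left hbq]

lemma prod_pos_of_zero_notMem {S : Finset ℕ} (hS : 0 ∉ S) : 0 < ∏ b ∈ S, b :=
  Finset.prod_pos fun _ hb => Nat.pos_of_ne_zero (ne_of_mem_of_not_mem hb hS)

lemma logDensLow_freeZ {S : Finset ℕ} (hS : 0 ∉ S) :
    logDensLow (freeZ S) = 1 - logDensLow (multiplesZ S) := by
  have hfree := hasLogDensity_of_periodic (prod_pos_of_zero_notMem hS)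
    (periodic_natCast_mem_freeZ S)
  have hmultiples : HasLogDensity (multiplesZ S) _ := compl_compl (multiplesZ S) ▸ hfree.compl
  rw [hfree.logDensLow_eq, hmultiples.logDensLow_eq, sub_sub_cancel]

lemma freeZ_union (B B' : Set ℕ) : freeZ (B ∪ B') = freeZ B ∩ freeZ B' := by
  ext n
  simp only [freeZ, multiplesZ, mem_compl_iff, mem_ofPred_eq, mem_inter_iff, mem_union,
    or_and_right, exists_or, not_or]

lemma one_sub_logDensLow_multiplesZ_union {S T : Finset ℕ} (hS : 0 ∉ S) (hT : 0 ∉ T)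
    (hST : (∏ b ∈ S, b).Coprime (∏ b ∈ T, b)) :
    1 - logDensLow (multiplesZ (S ∪ T)) =
      (1 - logDensLow (multiplesZ S)) * (1 - logDensLow (multiplesZ T)) := by
  have h0 : 0 ∉ S ∪ T := by simp [hS, hT]
  rw [← Finset.coe_union, ← logDensLow_freeZ h0, ← logDensLow_freeZ hS, ← logDensLow_freeZ hT,
    Finset.coe_union, freeZ_union, logDensLow_inter_of_periodic (prod_pos_of_zero_notMem hS)
      (prod_pos_of_zero_notMem hT) hST (periodic_natCast_mem_freeZ S)
      (periodic_natCast_mem_freeZ T)]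

lemma antitone_Btilde (B : Set ℕ) : Antitone (Btilde B) :=
  fun _ _ hNM _ hb => ⟨hb.1, fun p hp hpb => hNM.trans_lt (hb.2 p hp hpb)⟩

lemma antitone_logDensLow_multiplesZ_Btilde (B : Set ℕ) :
    Antitone fun N => logDensLow (multiplesZ (Btilde B N)) :=
  fun _ _ hNM => logDensLow_mono (multiplesZ_mono (antitone_Btilde B hNM))

lemma coprime_prod_of_subset_Btilde {B : Set ℕ} {N q : ℕ} (hq : 0 < q) (hqN : q ≤ N)
    {T : Finset ℕ} (hT : ↑T ⊆ Btilde B N) : q.Coprime (∏ b ∈ T, b) :=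
  Nat.Coprime.prod_right fun _ hb => Nat.coprime_of_dvd fun p hp hpq hpb =>
    ((Nat.le_of_dvd hq hpq).trans hqN).not_gt ((hT hb).2 p hp hpb)

lemma logDensLow_multiplesZ_Btilde_eq_one {B : Set ℕ} {α : ℝ} (hα : 0 < α)
    (h : ∀ N, α ≤ logDensLow (multiplesZ (Btilde B N))) (N : ℕ) :
    logDensLow (multiplesZ (Btilde B N)) = 1 := by
  set β := logDensLow (multiplesZ (Btilde B N))
  by_contra hβ1
  have hβlt : β < 1 := (logDensLow_le_one _).lt_of_ne hβ1
  have hcβ : β - (1 - β) * (α / 2) < β := by nlinarith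
  obtain ⟨S, hS0, hSB, hS⟩ := exists_finset_lt_logDensLow_multiplesZ hcβ
  obtain ⟨T, hT0, hTB, hT⟩ :=
    exists_finset_lt_logDensLow_multiplesZ ((half_lt_self hα).trans_le (h (max N (∏ b ∈ S, b))))
  have hcop := coprime_prod_of_subset_Btilde (prod_pos_of_zero_notMem hS0) (le_max_right _ _) hTB
  have hunion : logDensLow (multiplesZ (S ∪ T)) ≤ β := logDensLow_mono <| multiplesZ_mono <|
    union_subset hSB (hTB.trans (antitone_Btilde B (le_max_left _ _)))
  have hα1 : α < 1 := (h N).trans_lt hβlt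
  have hσ1 := logDensLow_le_one (multiplesZ S)
  set σ := logDensLow (multiplesZ S)
  set τ := logDensLow (multiplesZ T)
  refine lt_irrefl (1 - β) ?_
  calc 1 - β ≤ 1 - logDensLow (multiplesZ (S ∪ T)) := by gcongr
    _ = (1 - σ) * (1 - τ) := one_sub_logDensLow_multiplesZ_union hS0 hT0 hcop
    _ ≤ (1 - σ) * (1 - α / 2) := by gcongr
    _ ≤ ((1 - β) * (1 + α / 2)) * (1 - α / 2) := by gcongr <;> linarith
    _ = (1 - β) - (1 - β) * (α ^ 2 / 4) := by ring
    _ < 1 - β := sub_lt_self _ (mul_pos (sub_pos.2 hβlt) (by positivity))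

theorem btilde_dichotomy_general (B : Set ℕ) :
    (∀ N : ℕ, logDensLow (multiplesZ (Btilde B N)) = 1) ∨
      Tendsto (fun N : ℕ => logDensLow (multiplesZ (Btilde B N))) atTop (𝓝 0) := by
  set δ : ℕ → ℝ := fun N => logDensLow (multiplesZ (Btilde B N))
  have hbdd : BddBelow (range δ) := ⟨0, forall_mem_range.2 fun N => logDensLow_nonneg _⟩
  have hlim : Tendsto δ atTop (𝓝 (⨅ N, δ N)) :=
    tendsto_atTop_ciInf (antitone_logDensLow_multiplesZ_Btilde B) hbdd
  obtain hzero | hpos := (Real.iInf_nonneg fun N => logDensLow_nonneg _ : 0 ≤ ⨅ N, δ N).eq_or_lt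
  · exact Or.inr (hzero ▸ hlim)
  · exact Or.inl (logDensLow_multiplesZ_Btilde_eq_one hpos (ciInf_le hbdd))

/-- Dichotomy: either `δ(M_{B̃^(N)}) = 1` for all `N`, or `δ(M_{B̃^(N)}) → 0`. -/
theorem btilde_dichotomy (B : Set ℕ) (hB0 : 0 ∉ B) (hprim : Primitive B) :
    (∀ N : ℕ, logDensLow (multiplesZ (Btilde B N)) = 1) ∨
      Tendsto (fun N : ℕ => logDensLow (multiplesZ (Btilde B N))) atTop (𝓝 0) :=
  btilde_dichotomy_general B
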